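/- arXiv:2108.07551 — 2 statements merged into one kernel-verified Lean document; each statement's English description precedes it below -/
import Mathlib

section
/- If G is a finite simple chordal graph, then no pair of minimal separators S_1 and S_2 of G cross each other, i.e., for any two minimal separators S_1 and S_2 of G, S_1 does not separate any pair of vertices of S_2. -/
/-- A tree-decomposition of a graph `G` indexed by nodes of type `ι`. -/
structure TreeDecomp {V : Type} (G : SimpleGraph V) (ι : Type) where
  tree : SimpleGraph ι
  isTree : tree.IsTree
  bag : ι → Finset V
  bags_cover : ∀ v : V, ∃ i : ι, v ∈ bag i
  edges_covered : ∀ ⦃u v : V⦄, G.Adj u v → ∃ i : ι, u ∈ bag i ∧ v ∈ bag i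
  bags_connected : ∀ v : V, (tree.induce {i : ι | v ∈ bag i}).Connected

/-- The treewidth of `G`: the smallest `k` such that `G` has a tree-decomposition
all of whose bags have at most `k + 1` vertices (i.e. of width at most `k`). -/
noncomputable def treewidth {V : Type} (G : SimpleGraph V) : ℕ :=
  sInf { k : ℕ | ∃ (ι : Type) (td : TreeDecomp G ι), ∀ i : ι, (td.bag i).card ≤ k + 1 }

/-- The neighborhood `N_G(C)` of a vertex set `C`. -/
def nbhd {V : Type} (G : SimpleGraph V) (C : Set V) : Set V :=
  {v : V | v ∉ C ∧ ∃ u ∈ C, G.Adj u v}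

/-- `S` separates `a` from `b` in `G`: `a, b ∉ S` and every walk from `a` to `b` meets `S`
(so `a` and `b` lie in distinct components of `G` minus `S`). -/
def Separates {V : Type} (G : SimpleGraph V) (S : Set V) (a b : V) : Prop :=
  a ∉ S ∧ b ∉ S ∧ ∀ p : G.Walk a b, ∃ v ∈ p.support, v ∈ S

/-- `C` is a connected component of `G` minus `S`. -/
def IsCompOf {V : Type} (G : SimpleGraph V) (S : Set V) (C : Set V) : Prop :=
  C.Nonempty ∧ Disjoint C S ∧ (G.induce C).Connected ∧
    ∀ D : Set V, C ⊆ D → Disjoint D S → (G.induce D).Connected → D = C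

/-- `S` is a separator of `G`: `G` minus `S` has more than one connected component. -/
def IsSeparator {V : Type} (G : SimpleGraph V) (S : Set V) : Prop :=
  ∃ C D : Set V, IsCompOf G S C ∧ IsCompOf G S D ∧ C ≠ D

/-- `C` is a full component of `S` in `G`. -/
def IsFullCompOf {V : Type} (G : SimpleGraph V) (S : Set V) (C : Set V) : Prop :=
  IsCompOf G S C ∧ nbhd G C = S

/-- `S` is a minimal separator of `G`: it has at least two full components. -/
def IsMinSep {V : Type} (G : SimpleGraph V) (S : Set V) : Prop :=
  ∃ C D : Set V, IsFullCompOf G S C ∧ IsFullCompOf G S D ∧ C ≠ D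

/-- `R` crosses `S` if `R` separates some pair of vertices of `S`. -/
def Crosses {V : Type} (G : SimpleGraph V) (R S : Set V) : Prop :=
  ∃ a b : V, a ∈ S ∧ b ∈ S ∧ Separates G R a b

/-- `G` is chordal: every cycle with more than 3 vertices has a chord. -/
def IsChordal {V : Type} (G : SimpleGraph V) : Prop :=
  ∀ ⦃v : V⦄ (c : G.Walk v v), c.IsCycle → 3 < c.length →
    ∃ u w : V, u ∈ c.support ∧ w ∈ c.support ∧ G.Adj u w ∧ s(u, w) ∉ c.edges

/-- `H` is a triangulation of `G`. -/
def IsTriangulationOf {V : Type} (H G : SimpleGraph V) : Prop :=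
  IsChordal H ∧ G ≤ H

/-- `H` is a minimal triangulation of `G`. -/
def IsMinimalTriangulationOf {V : Type} (H G : SimpleGraph V) : Prop :=
  IsTriangulationOf H G ∧ ∀ H' : SimpleGraph V, IsTriangulationOf H' G → H' ≤ H → H' = H

/-- `K(S)`: the graph on the same vertex type whose edges join all pairs of
distinct vertices of `S`. -/
def completeOn {V : Type} (S : Set V) : SimpleGraph V :=
  SimpleGraph.fromRel (fun a b => a ∈ S ∧ b ∈ S)

/-- `s` is a maximal clique of `G`. -/
def IsMaximalClique {V : Type} (G : SimpleGraph V) (s : Set V) : Prop :=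
  G.IsClique s ∧ ∀ t : Set V, G.IsClique t → s ⊆ t → s = t

/-- `fill G td`: fill every bag of the tree-decomposition `td` into a clique. -/
def fill {V ι : Type} (G : SimpleGraph V) (td : TreeDecomp G ι) : SimpleGraph V :=
  G ⊔ SimpleGraph.fromRel (fun a b => ∃ i : ι, a ∈ td.bag i ∧ b ∈ td.bag i)

/-- The nodes of the maximal subtree `T(i,j)` of the tree containing `i` but not `j`
(for adjacent `i`, `j`): the nodes reachable from `i` after deleting the edge `{i, j}`. -/
def sideNodes {V ι : Type} {G : SimpleGraph V} (td : TreeDecomp G ι) (i j : ι) : Set ι :=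
  {t : ι | (td.tree.deleteEdges {s(i, j)}).Reachable i t}

/-- `V(i,j)`: the union of the bags of nodes in `T(i,j)`, with the vertices of the
bag of `j` removed. -/
def sideVerts {V ι : Type} {G : SimpleGraph V} (td : TreeDecomp G ι) (i j : ι) : Set V :=
  (⋃ t ∈ sideNodes td i j, (td.bag t : Set V)) \ (td.bag j : Set V)

/-- A perfect elimination order of `G`. -/
def IsPerfectElimOrder {V : Type} [Fintype V] (G : SimpleGraph V)
    (e : Fin (Fintype.card V) ≃ V) : Prop :=
  ∀ i : Fin (Fintype.card V),
    G.IsClique {u : V | G.Adj (e i) u ∧ ∃ j : Fin (Fintype.card V), i < j ∧ e j = u}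

/-- `H` is a minor of `G`, via the branch-set (minor model) characterization. -/
def IsMinorOf {W V : Type} (H : SimpleGraph W) (G : SimpleGraph V) : Prop :=
  ∃ B : W → Set V,
    (∀ w : W, (B w).Nonempty) ∧
    (∀ w : W, (G.induce (B w)).Connected) ∧
    (Pairwise fun w₁ w₂ : W => Disjoint (B w₁) (B w₂)) ∧
    ∀ ⦃w₁ w₂ : W⦄, H.Adj w₁ w₂ → ∃ a ∈ B w₁, ∃ b ∈ B w₂, G.Adj a b

/-- There is a clique minor of `G` minus `C` rooted on `R`, given by branch sets
`B v ∋ v` for `v ∈ R`: disjoint from `C`, pairwise disjoint, each connected, with an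
edge of `G` between every two of them. -/
def HasCliqueMinorRootedAvoiding {V : Type} (G : SimpleGraph V) (R C : Set V) : Prop :=
  ∃ B : R → Set V,
    (∀ v : R, (v : V) ∈ B v) ∧
    (∀ v : R, Disjoint (B v) C) ∧
    (∀ v : R, (G.induce (B v)).Connected) ∧
    (∀ u v : R, u ≠ v → Disjoint (B u) (B v)) ∧
    (∀ u v : R, u ≠ v → ∃ a ∈ B u, ∃ b ∈ B v, G.Adj a b)

/-- `S` is a minor-safe separator of `G`: for every component `C` of `G` minus `S`,
there is a clique minor of `G` minus `C` rooted on `N_G(C)`. -/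
def MinorSafe {V : Type} (G : SimpleGraph V) (S : Set V) : Prop :=
  ∀ C : Set V, IsCompOf G S C → HasCliqueMinorRootedAvoiding G (nbhd G C) C

/-!
A minimal separator `S` of a chordal graph is a clique (Dirac), and two vertices of a clique are
never separated. For the clique property, join nonadjacent `a, b ∈ S` by a shortest path through
each of two full components. Both paths are chordless, and no edge runs between the components, so
together the paths form a chordless cycle of length at least four.
-/

open SimpleGraph

section Chordless

variable {V : Type*} {G : SimpleGraph V}

lemma isChordless_of_length_eq_dist {a b : V} {p : G.Walk a b} (hp : p.length = G.dist a b) :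
    p.IsChordless := by
  -- A subwalk of a shortest walk is shortest, so the piece between adjacent vertices is an edge.
  have mem_edges_of_isSubwalk : ∀ {u w : V} (r : G.Walk u w), r.IsSubwalk p → G.Adj u w →
      s(u, w) ∈ p.edges := by
    intro u w r hr huw
    have hr_length : r.length = 1 :=
      (length_eq_dist_of_subwalk hp hr).trans (dist_eq_one_iff_adj.mpr huw)
    exact hr.edges_subset (match r, hr_length with | .cons _ .nil, _ => by simp)
  rw [Walk.isChordless_iff_forall_mem_edges]
  intro u w hu hw huw
  obtain ⟨p₁, p₂, rfl⟩ := Walk.mem_support_iff_exists_append.mp hu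
  rcases (Walk.mem_support_append_iff p₁ p₂).mp hw with hw | hw
  · obtain ⟨r₁, r₂, rfl⟩ := Walk.mem_support_iff_exists_append.mp hw
    rw [Sym2.eq_swap]
    exact mem_edges_of_isSubwalk r₂ ⟨r₁, p₂, rfl⟩ huw.symm
  · obtain ⟨r₁, r₂, rfl⟩ := Walk.mem_support_iff_exists_append.mp hw
    exact mem_edges_of_isSubwalk r₁ ⟨p₁, r₂, Walk.append_assoc ..⟩ huw

lemma isChordless_map {W : Type*} {H : SimpleGraph W} (f : G ↪g H) {a b : V} {p : G.Walk a b}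
    (hp : p.IsChordless) : (p.map f.toHom).IsChordless := by
  rw [Walk.isChordless_iff_forall_mem_edges]
  simp only [Walk.support_map, Walk.edges_map, List.mem_map]
  rintro _ _ ⟨u, hu, rfl⟩ ⟨w, hw, rfl⟩ huw
  exact ⟨s(u, w), hp.mem_edges hu hw (f.map_adj_iff.mp huw), rfl⟩

lemma isChordless_append {a b c : V} {p : G.Walk a b} {q : G.Walk b c}
    (hp : p.IsChordless) (hq : q.IsChordless)
    (hpq : ∀ u ∈ p.support, ∀ w ∈ q.support, G.Adj u w → u ∈ q.support ∨ w ∈ p.support) :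
    (p.append q).IsChordless := by
  have mem_edges_of_cross : ∀ u ∈ p.support, ∀ w ∈ q.support, G.Adj u w →
      s(u, w) ∈ (p.append q).edges := by
    intro u hu w hw huw
    rw [Walk.edges_append, List.mem_append]
    exact (hpq u hu w hw huw).symm.imp (hp.mem_edges hu · huw) (hq.mem_edges · hw huw)
  rw [Walk.isChordless_iff_forall_mem_edges]
  intro u w hu hw huw
  rw [Walk.mem_support_append_iff] at hu hw
  rcases hu with hu | hu <;> rcases hw with hw | hw
  · simp [hp.mem_edges hu hw huw]
  · exact mem_edges_of_cross u hu w hw huw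
  · exact Sym2.eq_swap ▸ mem_edges_of_cross w hw u hu huw.symm
  · simp [hq.mem_edges hu hw huw]

lemma exists_isPath_isChordless_of_preconnected_induce {X : Set V}
    (hX : (G.induce X).Preconnected) {a b : V} (ha : a ∈ X) (hb : b ∈ X) :
    ∃ p : G.Walk a b, p.IsPath ∧ p.IsChordless ∧ ∀ v ∈ p.support, v ∈ X := by
  obtain ⟨p, hp, hp_dist⟩ := (hX ⟨a, ha⟩ ⟨b, hb⟩).exists_path_of_dist
  let f := Embedding.induce (G := G) X
  refine ⟨p.map f.toHom, hp.map f.injective,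
    isChordless_map f (isChordless_of_length_eq_dist hp_dist), fun v hv ↦ ?_⟩
  obtain ⟨x, -, rfl⟩ := List.mem_map.mp (Walk.support_map f.toHom p ▸ hv)
  exact x.2

lemma isCycle_append_of_inter_support_subset {a b : V} {p : G.Walk a b} {q : G.Walk b a}
    (hp : p.IsPath) (hq : q.IsPath) (hpq : ∀ v ∈ p.support, v ∈ q.support → v = a ∨ v = b)
    (hlength : 1 < p.length) : (p.append q).IsCycle := by
  have start_notMem_tail : ∀ {x y : V} {r : G.Walk x y}, r.IsPath → x ∉ r.support.tail := by
    intro x y r hr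
    have hnodup := hr.support_nodup
    rw [← r.cons_tail_support] at hnodup
    exact (List.nodup_cons.mp hnodup).1
  refine hp.isCycle_append hq (fun v hvp hvq ↦ ?_) (.inl hlength)
  rcases hpq v (List.mem_of_mem_tail hvp) (List.mem_of_mem_tail hvq) with rfl | rfl
  · exact start_notMem_tail hp hvp
  · exact start_notMem_tail hq hvq

lemma connected_induce_insert {C : Set V} (hC : (G.induce C).Preconnected) {a x : V}
    (hx : x ∈ C) (hxa : G.Adj x a) : (G.induce (insert a C)).Connected :=
  connected_induce_union (s := {a}) .of_subsingleton hC (Set.mem_singleton a) hx hxa.symm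

end Chordless

variable {V : Type} {G : SimpleGraph V}

lemma IsChordal.length_le_three (hG : IsChordal G) {v : V} {c : G.Walk v v} (hc : c.IsCycle)
    (hc_chordless : c.IsChordless) : c.length ≤ 3 := by
  by_contra! hlength
  obtain ⟨u, w, hu, hw, huw, hedge⟩ := hG c hc hlength
  exact hedge (hc_chordless.mem_edges hu hw huw)

lemma exists_isPath_isChordless_of_mem_nbhd {C : Set V} (hC : (G.induce C).Preconnected)
    {a b : V} (ha : a ∈ nbhd G C) (hb : b ∈ nbhd G C) :
    ∃ p : G.Walk a b, p.IsPath ∧ p.IsChordless ∧ ∀ v ∈ p.support, v = a ∨ v = b ∨ v ∈ C := by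
  obtain ⟨-, x, hx, hxa⟩ := ha
  obtain ⟨-, y, hy, hyb⟩ := hb
  have hbC : (G.induce (insert b C)).Connected := connected_induce_insert hC hy hyb
  have habC : (G.induce (insert a (insert b C))).Connected :=
    connected_induce_insert hbC.preconnected (Set.mem_insert_of_mem b hx) hxa
  exact exists_isPath_isChordless_of_preconnected_induce habC.preconnected
    (Set.mem_insert a _) (Set.mem_insert_of_mem a (Set.mem_insert b C))

lemma IsChordal.isClique_nbhd_inter_nbhd (hG : IsChordal G) {C D : Set V}
    (hC : (G.induce C).Preconnected) (hD : (G.induce D).Preconnected)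
    (hCD : Disjoint C D) (hND : Disjoint (nbhd G C) D) :
    G.IsClique (nbhd G C ∩ nbhd G D) := by
  rintro a ⟨haC, haD⟩ b ⟨hbC, hbD⟩ hab
  by_contra hnadj
  have not_adj : ∀ u ∈ C, ∀ w ∈ D, ¬ G.Adj u w := fun u hu w hw huw ↦
    hND.notMem_of_mem_right hw ⟨hCD.notMem_of_mem_right hw, u, hu, huw⟩
  obtain ⟨p, hp, hp_chordless, hpC⟩ := exists_isPath_isChordless_of_mem_nbhd hC haC hbC
  obtain ⟨q, hq, hq_chordless, hqD⟩ := exists_isPath_isChordless_of_mem_nbhd hD hbD haD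
  have hp_length : 1 < p.length :=
    (p.reachable.one_lt_dist_of_ne_of_not_adj hab hnadj).trans_le (dist_le p)
  have hq_length : 1 < q.length :=
    (q.reachable.one_lt_dist_of_ne_of_not_adj hab.symm (hnadj ·.symm)).trans_le (dist_le q)
  have hinter : ∀ v ∈ p.support, v ∈ q.support → v = a ∨ v = b := by grind
  have hcross : ∀ u ∈ p.support, ∀ w ∈ q.support, G.Adj u w →
      u ∈ q.support ∨ w ∈ p.support := by
    grind [Walk.start_mem_support, Walk.end_mem_support]
  have hlength := hG.length_le_three (isCycle_append_of_inter_support_subset hp hq hinter hp_length)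
    (isChordless_append hp_chordless hq_chordless hcross)
  rw [Walk.length_append] at hlength
  lia

lemma IsCompOf.disjoint {S C D : Set V} (hC : IsCompOf G S C) (hD : IsCompOf G S D)
    (hne : C ≠ D) : Disjoint C D := by
  obtain ⟨-, hCS, hC_conn, hC_max⟩ := hC
  obtain ⟨-, hDS, hD_conn, hD_max⟩ := hD
  by_contra hCD
  have hunion_conn : (G.induce (C ∪ D)).Connected := induce_union_connected
    hC_conn.preconnected hD_conn.preconnected (Set.not_disjoint_iff_nonempty_inter.mp hCD)
  have hunion_disj : Disjoint (C ∪ D) S := hCS.union_left hDS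
  exact hne ((hC_max _ Set.subset_union_left hunion_disj hunion_conn).symm.trans
    (hD_max _ Set.subset_union_right hunion_disj hunion_conn))

theorem IsChordal.isClique_of_isMinSep (hG : IsChordal G) {S : Set V} (hS : IsMinSep G S) :
    G.IsClique S := by
  obtain ⟨C, D, ⟨hC, hCS⟩, ⟨hD, hDS⟩, hne⟩ := hS
  have hclique := hG.isClique_nbhd_inter_nbhd hC.2.2.1.preconnected hD.2.2.1.preconnected
    (hC.disjoint hD hne) (hCS ▸ hD.2.1.symm)
  rwa [hCS, hDS, Set.inter_self] at hclique

lemma Separates.ne {R : Set V} {a b : V} (h : Separates G R a b) : a ≠ b := by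
  rintro rfl
  obtain ⟨ha, -, hwalk⟩ := h
  simpa [ha] using hwalk .nil

lemma Separates.not_adj {R : Set V} {a b : V} (h : Separates G R a b) : ¬ G.Adj a b := by
  intro hab
  obtain ⟨ha, hb, hwalk⟩ := h
  simpa [ha, hb] using hwalk hab.toWalk

theorem chordal_minSeps_not_cross_general (hG : IsChordal G) {S : Set V} (hS : IsMinSep G S)
    (R : Set V) : ¬ Crosses G R S := by
  rintro ⟨a, b, ha, hb, hsep⟩
  exact hsep.not_adj (hG.isClique_of_isMinSep hS ha hb hsep.ne)

/-- in a chordal graph, no two minimal separators cross each other. -/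
theorem chordal_minSeps_not_cross {V : Type} [Fintype V] (G : SimpleGraph V)
    (hG : IsChordal G) (S₁ S₂ : Set V) (h₁ : IsMinSep G S₁) (h₂ : IsMinSep G S₂) :
    ¬ Crosses G S₁ S₂ :=
  chordal_minSeps_not_cross_general hG h₂ S₁
end

section
/- Let S be a clique separator of a finite simple graph G. Then tw(G) is the larger of |S| − 1 and the maximum of tw(G[C ∪ N_G(C)]) over all connected components C of G minus S. -/
/-!
Clique separators are compatible with tree-decompositions in both directions. Subtrees of a tree
have the Helly property, so a clique lies in a single bag: this gives `|S| ≤ tw(G) + 1`, and the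
bound on the pieces `G[C ∪ N(C)]` is monotonicity. Conversely, every `N(C)` is contained in `S` and
hence is a clique, so it lies in a bag of any tree-decomposition of `G[C ∪ N(C)]`; joining such a
bag of each piece to a new bag `S` produces a tree-decomposition of `G`.
-/

section Convexity

open SimpleGraph

variable {ι : Type*} {T : SimpleGraph ι} {A B C : Set ι}

lemma isPath_append {u v w : ι} {p : T.Walk u v} {q : T.Walk v w} (hp : p.IsPath) (hq : q.IsPath)
    (hpq : ∀ x ∈ p.support, x ∈ q.support → x = v) : (p.append q).IsPath := by
  have hv : v ∉ q.support.tail := by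
    have hnodup := hq.support_nodup
    rw [← Walk.cons_tail_support] at hnodup
    exact (List.nodup_cons.mp hnodup).1
  rw [Walk.isPath_def, Walk.support_append]
  refine hp.support_nodup.append hq.support_nodup.tail fun x hxp hxq => hv ?_
  exact hpq x hxp (List.mem_of_mem_tail hxq) ▸ hxq

/-- A set of nodes is path-convex if it contains every path between two of its nodes. In a tree,
the nonempty path-convex sets are the node sets of subtrees. -/
def IsPathConvex (T : SimpleGraph ι) (A : Set ι) : Prop :=
  ∀ ⦃a⦄, a ∈ A → ∀ ⦃b⦄, b ∈ A → ∀ p : T.Walk a b, p.IsPath → ∀ x ∈ p.support, x ∈ A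

namespace IsPathConvex

lemma inter (hA : IsPathConvex T A) (hB : IsPathConvex T B) : IsPathConvex T (A ∩ B) :=
  fun _ ha _ hb p hp x hx => ⟨hA ha.1 hb.1 p hp x hx, hB ha.2 hb.2 p hp x hx⟩

lemma of_induce_preconnected (hT : T.IsAcyclic) (hA : (T.induce A).Preconnected) :
    IsPathConvex T A := by
  intro a ha b hb p hp x hx
  obtain ⟨q, hq⟩ := (hA ⟨a, ha⟩ ⟨b, hb⟩).exists_isPath
  have hpq : p = q.map (Embedding.induce A).toHom :=
    congrArg Subtype.val <|
      (hT.subsingleton_path a b).elim ⟨p, hp⟩ ⟨_, hq.map Subtype.val_injective⟩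
  have hxq : x ∈ (q.map (Embedding.induce A).toHom).support := hpq ▸ hx
  rw [Walk.support_map, List.mem_map] at hxq
  obtain ⟨y, -, rfl⟩ := hxq
  exact y.2

/-- The node of `A` closest to `b` is a gate: every path from `b` into `A` passes through it. -/
lemma exists_gate (hT : T.IsTree) (hA : IsPathConvex T A) (hne : A.Nonempty) (b : ι) :
    ∃ g ∈ A, ∀ a ∈ A, ∀ p : T.Walk b a, p.IsPath → g ∈ p.support := by
  classical
  obtain ⟨g, hgA, hmin⟩ := exists_minimalFor_of_wellFoundedLT (· ∈ A) (T.dist b) hne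
  refine ⟨g, hgA, fun a ha p hp => ?_⟩
  obtain ⟨p₀, hp₀, hlen⟩ := hT.connected.exists_path_of_dist b g
  obtain ⟨q, hq⟩ := hT.connected.exists_isPath g a
  have meets_only_at_g : ∀ x ∈ p₀.support, x ∈ A → x = g := by
    intro x hx hxA
    by_contra hxg
    have hlt : T.dist b x < T.dist b g :=
      (dist_le _).trans_lt (hlen ▸ Walk.length_takeUntil_lt_length hx hxg)
    exact hlt.not_ge (hmin hxA hlt.le)
  have happend : (p₀.append q).IsPath :=
    isPath_append hp₀ hq fun x hxp hxq => meets_only_at_g x hxp (hA hgA ha q hq x hxq)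
  have hpq : p = p₀.append q :=
    congrArg Subtype.val ((hT.isAcyclic.subsingleton_path b a).elim ⟨p, hp⟩ ⟨_, happend⟩)
  simp [hpq]

lemma inter_inter_nonempty (hT : T.IsTree) (hA : IsPathConvex T A) (hB : IsPathConvex T B)
    (hC : IsPathConvex T C) (hAB : (A ∩ B).Nonempty) (hBC : (B ∩ C).Nonempty)
    (hAC : (A ∩ C).Nonempty) : (A ∩ B ∩ C).Nonempty := by
  obtain ⟨a, haA, haB⟩ := hAB
  obtain ⟨b, hbB, hbC⟩ := hBC
  obtain ⟨c, hcA, hcC⟩ := hAC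
  obtain ⟨g, hgA, hgate⟩ := hA.exists_gate hT ⟨a, haA⟩ b
  obtain ⟨p, hp⟩ := hT.connected.exists_isPath b a
  obtain ⟨q, hq⟩ := hT.connected.exists_isPath b c
  exact ⟨g, ⟨hgA, hB hbB haB p hp g (hgate a haA p hp)⟩,
    hC hbC hcC q hq g (hgate c hcA q hq)⟩

lemma helly {α : Type*} (hT : T.IsTree) (s : Finset α) (A : α → Set ι)
    (hA : ∀ v ∈ s, IsPathConvex T (A v)) (hpair : ∀ u ∈ s, ∀ v ∈ s, (A u ∩ A v).Nonempty) :
    (⋂ v ∈ s, A v).Nonempty := by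
  classical
  rcases s.eq_empty_or_nonempty with rfl | hs
  · have := hT.connected.nonempty
    simp
  induction hs using Finset.Nonempty.cons_induction generalizing A with
  | singleton v => simpa using hpair v
  | cons v s _ hs ih =>
    simp only [Finset.forall_mem_cons] at hA hpair
    obtain ⟨x, hx⟩ := ih (fun u => A v ∩ A u) (fun u hu => hA.1.inter (hA.2 u hu))
      fun u hu w hw => by
        rw [← Set.inter_inter_distrib_left, ← Set.inter_assoc]
        exact inter_inter_nonempty hT hA.1 (hA.2 u hu) (hA.2 w hw) (hpair.1.2 u hu)
          ((hpair.2 u hu).2 w hw) (hpair.1.2 w hw)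
    simp only [Set.mem_iInter] at hx
    obtain ⟨u, hu⟩ := hs
    refine ⟨x, ?_⟩
    simpa using ⟨(hx u hu).1, fun w hw => (hx w hw).2⟩

end IsPathConvex

end Convexity

section StarGlue

open SimpleGraph

lemma isBridge_iff_exists_cut {V : Type*} {G : SimpleGraph V} {u v : V} :
    G.IsBridge s(u, v) ↔
      ∃ A : Set V, u ∈ A ∧ v ∉ A ∧ ∀ x ∈ A, ∀ y ∉ A, G.Adj x y → s(x, y) = s(u, v) := by
  rw [isBridge_iff]
  constructor
  · refine fun h => ⟨{x | (G.deleteEdges {s(u, v)}).Reachable u x}, .refl u, h, ?_⟩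
    intro x hx y hy hxy
    by_contra hne
    exact hy (hx.trans (deleteEdges_adj.mpr ⟨hxy, hne⟩).reachable)
  · rintro ⟨A, hu, hv, hA⟩ ⟨p⟩
    obtain ⟨d, -, hdA, hdA'⟩ := p.exists_boundary_dart A hu hv
    obtain ⟨hadj, hne⟩ := deleteEdges_adj.mp d.adj
    exact hne (hA _ hdA _ hdA' hadj)

variable {κ : Type*} {τ : κ → Type*} (T : ∀ c, SimpleGraph (τ c)) (r : ∀ c, τ c)

/-- The adjacency relation of `starGlue`. -/
inductive StarGlueAdj : Option (Σ c, τ c) → Option (Σ c, τ c) → Prop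
  | toRoot (c : κ) : StarGlueAdj none (some ⟨c, r c⟩)
  | fromRoot (c : κ) : StarGlueAdj (some ⟨c, r c⟩) none
  | inner {c : κ} {i j : τ c} (h : (T c).Adj i j) : StarGlueAdj (some ⟨c, i⟩) (some ⟨c, j⟩)

/-- The disjoint union of the rooted graphs `(T c, r c)`, together with a new node `none` joined to
every root. It is the underlying tree of a glued tree-decomposition. -/
def starGlue : SimpleGraph (Option (Σ c, τ c)) where
  Adj := StarGlueAdj T r
  symm := ⟨by
    rintro _ _ (c | c | h)
    exacts [.fromRoot c, .toRoot c, .inner h.symm]⟩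
  loopless := ⟨by
    rintro _ (_ | _ | h)
    exact h.ne rfl⟩

namespace starGlue

variable {T r}

lemma induce_image_connected {c : κ} {A : Set (τ c)} (hA : ((T c).induce A).Connected) :
    ((starGlue T r).induce ((fun i => some ⟨c, i⟩) '' A)).Connected := by
  let f : (T c).induce A →g (starGlue T r).induce ((fun i => some ⟨c, i⟩) '' A) :=
    { toFun i := ⟨some ⟨c, i⟩, Set.mem_image_of_mem _ i.2⟩
      map_rel' h := StarGlueAdj.inner h }
  refine hA.map f ?_
  rintro ⟨_, i, hi, rfl⟩
  exact ⟨⟨i, hi⟩, rfl⟩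

lemma induce_connected_of_none_mem {P : Set (Option (Σ c, τ c))} (hnone : none ∈ P)
    (hP : ∀ c i, some ⟨c, i⟩ ∈ P →
      some ⟨c, r c⟩ ∈ P ∧ ((T c).induce {j | some ⟨c, j⟩ ∈ P}).Connected) :
    ((starGlue T r).induce P).Connected := by
  refine induce_connected_of_patches none hnone ?_
  rintro (_ | ⟨c, i⟩) hi
  · exact ⟨P, subset_rfl, hnone, hnone, .rfl⟩
  obtain ⟨hroot, hconn⟩ := hP c i hi
  have hstar := induce_union_connected
    (induce_pair_connected_of_adj (StarGlueAdj.toRoot c : (starGlue T r).Adj _ _)).preconnected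
    (induce_image_connected hconn).preconnected
    ⟨some ⟨c, r c⟩, by simp, r c, hroot, rfl⟩
  refine ⟨_, ?_, Or.inl (by simp), Or.inr ⟨i, hi, rfl⟩, hstar _ _⟩
  rintro _ ((rfl | rfl) | ⟨j, hj, rfl⟩)
  exacts [hnone, hroot, hj]

lemma connected (hT : ∀ c, (T c).Connected) : (starGlue T r).Connected := by
  rw [connected_iff_exists_forall_reachable]
  refine ⟨none, ?_⟩
  rintro (_ | ⟨c, i⟩)
  · rfl
  · have hroot : (starGlue T r).Adj none (some ⟨c, r c⟩) := .toRoot c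
    let f : T c →g starGlue T r := ⟨fun i => some ⟨c, i⟩, .inner⟩
    exact hroot.reachable.trans (((hT c).preconnected (r c) i).map f)

lemma isBridge_root (c : κ) : (starGlue T r).IsBridge s(some ⟨c, r c⟩, none) := by
  refine isBridge_iff_exists_cut.mpr ⟨Set.range fun i => some ⟨c, i⟩, ⟨r c, rfl⟩, by simp, ?_⟩
  rintro _ ⟨i, rfl⟩ _ hy (_ | _ | h)
  · rfl
  · exact absurd ⟨_, rfl⟩ hy

lemma isBridge_inner {c : κ} {i j : τ c} (h : (T c).IsBridge s(i, j)) :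
    (starGlue T r).IsBridge s(some ⟨c, i⟩, some ⟨c, j⟩) := by
  obtain ⟨A, hi, hj, hA⟩ := isBridge_iff_exists_cut.mp h
  refine isBridge_iff_exists_cut.mpr
    ⟨{x | (∃ k ∈ A, x = some ⟨c, k⟩) ∨ r c ∈ A ∧ ∀ k, x ≠ some ⟨c, k⟩}, by simpa, by simpa, ?_⟩
  rintro _ hx _ hy (d | d | @⟨d, k, l, hkl⟩)
  · grind
  · grind
  · by_cases hd : d = c
    · subst hd
      have := hA k (by simpa using hx) l (by simpa using hy) hkl
      exact congrArg (Sym2.map fun t => (some ⟨d, t⟩ : Option (Σ c, τ c))) this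
    · grind

lemma isTree (hT : ∀ c, (T c).IsTree) : (starGlue T r).IsTree := by
  refine ⟨connected fun c => (hT c).connected, isAcyclic_iff_forall_adj_isBridge.mpr ?_⟩
  rintro _ _ (c | c | h)
  · rw [Sym2.eq_swap]
    exact isBridge_root c
  · exact isBridge_root c
  · exact isBridge_inner (isAcyclic_iff_forall_adj_isBridge.mp (hT _).isAcyclic h)

end starGlue

end StarGlue

namespace TreeDecomp

open SimpleGraph

variable {V W ι : Type} {G : SimpleGraph V} {H : SimpleGraph W}

lemma exists_bag_of_isClique (td : TreeDecomp G ι) (s : Finset V) (hs : G.IsClique s) :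
    ∃ i, s ⊆ td.bag i := by
  obtain ⟨i, hi⟩ := IsPathConvex.helly td.isTree s (fun v => {i | v ∈ td.bag i})
    (fun v _ => .of_induce_preconnected td.isTree.isAcyclic (td.bags_connected v).preconnected)
    fun u hu v hv => by
      by_cases huv : u = v
      · simpa [huv, Set.Nonempty] using td.bags_cover v
      · exact td.edges_covered (hs hu hv huv)
  exact ⟨i, fun v hv => Set.mem_iInter₂.mp hi v hv⟩

/-- The restriction of a tree-decomposition of `G` to a copy of a graph `H` in `G`. -/
noncomputable def comap (td : TreeDecomp G ι) (f : Copy H G) : TreeDecomp H ι where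
  tree := td.tree
  isTree := td.isTree
  bag i := (td.bag i).preimage f f.injective.injOn
  bags_cover v := by simpa using td.bags_cover (f v)
  edges_covered u v huv := by simpa using td.edges_covered (f.toHom.map_adj huv)
  bags_connected v := by
    have hnodes : {i | v ∈ (td.bag i).preimage f f.injective.injOn} = {i | f v ∈ td.bag i} :=
      Set.ext fun i => Finset.mem_preimage
    exact hnodes ▸ td.bags_connected (f v)

/-- The tree-decomposition with a single bag. -/
def singleBag [Fintype V] (G : SimpleGraph V) : TreeDecomp G Unit where
  tree := ⊥
  isTree := .of_subsingleton
  bag _ := Finset.univ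
  bags_cover _ := ⟨(), Finset.mem_univ _⟩
  edges_covered _ _ _ := ⟨(), Finset.mem_univ _, Finset.mem_univ _⟩
  bags_connected v := by
    have : Nonempty {_i : Unit | v ∈ Finset.univ} := ⟨(), Finset.mem_univ v⟩
    exact IsTree.of_subsingleton.connected

variable {κ : Type} {U : κ → Set V} {τ : κ → Type}

/-- The bags of `TreeDecomp.glue`: `S` at the new node, and elsewhere the bags of the given
tree-decompositions, as subsets of `V`. -/
def glueBag (S : Finset V) (td : ∀ c, TreeDecomp (G.induce (U c)) (τ c)) :
    Option (Σ c, τ c) → Finset V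
  | none => S
  | some ⟨c, i⟩ => ((td c).bag i).map (.subtype (· ∈ U c))

lemma setOf_mem_glueBag_some {S : Finset V} (td : ∀ c, TreeDecomp (G.induce (U c)) (τ c)) {c : κ}
    (v : U c) : {i | v.1 ∈ glueBag S td (some ⟨c, i⟩)} = {i | v ∈ (td c).bag i} :=
  Set.ext fun _ => Finset.mem_map' (.subtype (· ∈ U c))

lemma setOf_mem_glueBag {S : Finset V} (td : ∀ c, TreeDecomp (G.induce (U c)) (τ c))
    (hU : Pairwise fun c d => U c ∩ U d ⊆ S) {c : κ} (v : U c) (hv : v.1 ∉ S) :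
    {x | v.1 ∈ glueBag S td x} = (fun i => some ⟨c, i⟩) '' {i | v ∈ (td c).bag i} := by
  rw [← setOf_mem_glueBag_some (S := S)]
  ext (_ | ⟨d, j⟩)
  · simpa [glueBag] using hv
  · constructor
    · intro hj
      obtain ⟨w, -, hwv⟩ := Finset.mem_map.mp hj
      obtain rfl : d = c := hU.eq fun h => hv (h ⟨hwv ▸ w.2, v.2⟩)
      exact ⟨j, hj, rfl⟩
    · rintro ⟨i, hi, ⟨⟩⟩
      exact hi

/-- Tree-decompositions of induced subgraphs `G[U c]` that overlap only in `S`, joined to a new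
bag `S` at nodes `r c` whose bags contain `U c ∩ S`. -/
noncomputable def glue (S : Finset V) (td : ∀ c, TreeDecomp (G.induce (U c)) (τ c)) (r : ∀ c, τ c)
    (hr : ∀ c (v : U c), v.1 ∈ S → v ∈ (td c).bag (r c))
    (hcover : ∀ v, v ∈ S ∨ ∃ c, v ∈ U c)
    (hadj : ∀ u v, G.Adj u v → (u ∈ S ∧ v ∈ S) ∨ ∃ c, u ∈ U c ∧ v ∈ U c)
    (hU : Pairwise fun c d => U c ∩ U d ⊆ S) :
    TreeDecomp G (Option (Σ c, τ c)) where
  tree := starGlue (fun c => (td c).tree) r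
  isTree := starGlue.isTree fun c => (td c).isTree
  bag := glueBag S td
  bags_cover v := by
    rcases hcover v with hv | ⟨c, hv⟩
    · exact ⟨none, hv⟩
    · obtain ⟨i, hi⟩ := (td c).bags_cover ⟨v, hv⟩
      exact ⟨some ⟨c, i⟩, Finset.mem_map_of_mem _ hi⟩
  edges_covered u v huv := by
    rcases hadj u v huv with h | ⟨c, hu, hv⟩
    · exact ⟨none, h⟩
    · obtain ⟨i, hui, hvi⟩ := (td c).edges_covered (u := ⟨u, hu⟩) (v := ⟨v, hv⟩) huv
      exact ⟨some ⟨c, i⟩, Finset.mem_map_of_mem _ hui, Finset.mem_map_of_mem _ hvi⟩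
  bags_connected v := by
    by_cases hv : v ∈ S
    · refine starGlue.induce_connected_of_none_mem hv fun c i hi => ?_
      obtain ⟨w, -, rfl⟩ := Finset.mem_map.mp hi
      exact ⟨Finset.mem_map_of_mem _ (hr c w hv),
        setOf_mem_glueBag_some td w ▸ (td c).bags_connected w⟩
    · obtain ⟨c, hc⟩ := (hcover v).resolve_left hv
      rw [setOf_mem_glueBag td hU ⟨v, hc⟩ hv]
      exact starGlue.induce_image_connected ((td c).bags_connected ⟨v, hc⟩)

end TreeDecomp

section TreewidthLE

open SimpleGraph

variable {V W : Type} {G : SimpleGraph V} {H : SimpleGraph W} {S : Set V} {k : ℕ}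

/-- `G` has a tree-decomposition of width at most `k`. Unlike `treewidth G ≤ k`, this is meaningful
when `G` has no tree-decomposition of finite width, where `treewidth G` is `sInf ∅ = 0`. -/
def TreewidthLE (G : SimpleGraph V) (k : ℕ) : Prop :=
  ∃ (ι : Type) (td : TreeDecomp G ι), ∀ i, (td.bag i).card ≤ k + 1

lemma exists_treewidthLE [Finite V] (G : SimpleGraph V) : ∃ k, TreewidthLE G k := by
  have := Fintype.ofFinite V
  exact ⟨Fintype.card V, Unit, .singleBag G, fun _ => Nat.le_succ _⟩

lemma treewidth_le_iff (hG : ∃ k, TreewidthLE G k) : treewidth G ≤ k ↔ TreewidthLE G k := by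
  refine ⟨fun hk => ?_, fun h => Nat.sInf_le h⟩
  obtain ⟨ι, td, htd⟩ : TreewidthLE G (treewidth G) := Nat.sInf_mem hG
  exact ⟨ι, td, fun i => (htd i).trans (Nat.add_le_add_right hk 1)⟩

namespace TreewidthLE

lemma of_isContained (hG : TreewidthLE G k) (h : H ⊑ G) : TreewidthLE H k := by
  obtain ⟨ι, td, htd⟩ := hG
  obtain ⟨f⟩ := h
  refine ⟨ι, td.comap f, fun i => le_trans ?_ (htd i)⟩
  exact Finset.card_le_card_of_injOn f (fun v hv => by simpa [TreeDecomp.comap] using hv)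
    f.injective.injOn

lemma encard_le_of_isClique (hG : TreewidthLE G k) (hS : G.IsClique S) :
    S.encard ≤ (k + 1 : ℕ) := by
  obtain ⟨ι, td, htd⟩ := hG
  by_contra! hlt
  obtain ⟨t, htS, ht⟩ := Set.exists_subset_encard_eq (Order.add_one_le_of_lt hlt)
  lift t to Finset V using Set.finite_of_encard_eq_coe ht
  obtain ⟨i, hi⟩ := td.exists_bag_of_isClique t (hS.subset htS)
  have hle := (Finset.card_le_card hi).trans (htd i)
  rw [Set.encard_coe_eq_coe_finsetCard] at ht
  norm_cast at ht
  omega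

lemma glue {κ : Type} {U : κ → Set V} {S : Finset V} (hclique : G.IsClique S)
    (hcard : S.card ≤ k + 1) (hcover : ∀ v, v ∈ S ∨ ∃ c, v ∈ U c)
    (hadj : ∀ u v, G.Adj u v → (u ∈ S ∧ v ∈ S) ∨ ∃ c, u ∈ U c ∧ v ∈ U c)
    (hU : Pairwise fun c d => U c ∩ U d ⊆ S) (htw : ∀ c, TreewidthLE (G.induce (U c)) k) :
    TreewidthLE G k := by
  choose τ td htd using htw
  have exists_root (c : κ) : ∃ i, ∀ v : U c, v.1 ∈ S → v ∈ (td c).bag i := by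
    let s := S.preimage (Subtype.val : U c → V) Subtype.val_injective.injOn
    have hs : (G.induce (U c)).IsClique s := fun u hu v hv huv =>
      hclique (by simpa [s] using hu) (by simpa [s] using hv) (Subtype.val_injective.ne huv)
    obtain ⟨i, hi⟩ := (td c).exists_bag_of_isClique s hs
    exact ⟨i, fun v hv => hi (by simpa [s] using hv)⟩
  choose r hr using exists_root
  refine ⟨_, TreeDecomp.glue S td r hr hcover hadj hU, ?_⟩
  rintro (_ | ⟨c, i⟩)
  · exact hcard
  · simpa [TreeDecomp.glue, TreeDecomp.glueBag] using htd c i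

end TreewidthLE

end TreewidthLE

section Components

open SimpleGraph

variable {V : Type} {G : SimpleGraph V} {S C D : Set V}

lemma exists_isCompOf_mem {v : V} (hv : v ∉ S) : ∃ C, IsCompOf G S C ∧ v ∈ C := by
  let F : Set (Set V) := {D | v ∈ D ∧ Disjoint D S ∧ (G.induce D).Connected}
  have hF : {v} ∈ F := ⟨rfl, by simpa, IsTree.of_subsingleton.connected⟩
  have hvF : v ∈ ⋃₀ F := ⟨_, hF, rfl⟩
  refine ⟨⋃₀ F, ⟨⟨v, hvF⟩, Set.disjoint_sUnion_left.mpr fun D hD => hD.2.1, ?_, ?_⟩, hvF⟩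
  · exact induce_sUnion_connected_of_pairwise_not_disjoint ⟨_, hF⟩
      (fun hD hE => ⟨v, hD.1, hE.1⟩) fun hD => hD.2.2
  · intro D hle hDS hD
    have hDF : D ∈ F := ⟨hle hvF, hDS, hD⟩
    exact (Set.subset_sUnion_of_mem hDF).antisymm hle

namespace IsCompOf

lemma subset_of_connected (hC : IsCompOf G S C) (hD : (G.induce D).Connected) (hDS : Disjoint D S)
    (h : (C ∩ D).Nonempty) : D ⊆ C := by
  have hunion := hC.2.2.2 (C ∪ D) Set.subset_union_left (hC.2.1.union_left hDS)
    (induce_union_connected hC.2.2.1.preconnected hD.preconnected h)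
  exact Set.union_eq_left.mp hunion

lemma eq_of_mem (hC : IsCompOf G S C) (hD : IsCompOf G S D) {v : V} (hvC : v ∈ C)
    (hvD : v ∈ D) : C = D :=
  (hD.subset_of_connected hC.2.2.1 hC.2.1 ⟨v, hvD, hvC⟩).antisymm
    (hC.subset_of_connected hD.2.2.1 hD.2.1 ⟨v, hvC, hvD⟩)

lemma nbhd_subset (hC : IsCompOf G S C) : nbhd G C ⊆ S := by
  rintro v ⟨hvC, u, huC, huv⟩
  by_contra hvS
  have hdisj : Disjoint {u, v} S :=
    Set.disjoint_insert_left.mpr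
      ⟨hC.2.1.notMem_of_mem_left huC, Set.disjoint_singleton_left.mpr hvS⟩
  exact hvC (hC.subset_of_connected (induce_pair_connected_of_adj huv) hdisj
    ⟨u, huC, by simp⟩ (by simp))

lemma union_nbhd_inter_subset (hC : IsCompOf G S C) (hD : IsCompOf G S D) (hne : C ≠ D) :
    (C ∪ nbhd G C) ∩ (D ∪ nbhd G D) ⊆ S := by
  rintro v ⟨hvC | hvC, hvD | hvD⟩
  exacts [absurd (hC.eq_of_mem hD hvC hvD) hne, hD.nbhd_subset hvD, hC.nbhd_subset hvC,
    hC.nbhd_subset hvC]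

end IsCompOf

lemma mem_union_nbhd_of_adj {u v : V} (hu : u ∈ C) (huv : G.Adj u v) : v ∈ C ∪ nbhd G C :=
  or_iff_not_imp_left.mpr fun hv => ⟨hv, u, hu, huv⟩

lemma exists_isCompOf_of_adj {u v : V} (huv : G.Adj u v) (h : u ∉ S ∨ v ∉ S) :
    ∃ C, IsCompOf G S C ∧ u ∈ C ∪ nbhd G C ∧ v ∈ C ∪ nbhd G C := by
  wlog hu : u ∉ S generalizing u v
  · obtain ⟨C, hC, hv, hu⟩ := this huv.symm h.symm (h.resolve_left hu)
    exact ⟨C, hC, hu, hv⟩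
  obtain ⟨C, hC, huC⟩ := exists_isCompOf_mem hu
  exact ⟨C, hC, Or.inl huC, mem_union_nbhd_of_adj huC huv⟩

end Components

section CliqueSeparator

variable {V : Type} {G : SimpleGraph V} {S : Set V}

lemma treewidthLE_iff_of_isClique (hclique : G.IsClique S) {k : ℕ} :
    TreewidthLE G k ↔ S.encard ≤ (k + 1 : ℕ) ∧
      ∀ C, IsCompOf G S C → TreewidthLE (G.induce (C ∪ nbhd G C)) k := by
  constructor
  · exact fun hG => ⟨hG.encard_le_of_isClique hclique,
      fun C _ => hG.of_isContained ⟨SimpleGraph.Copy.induce G _⟩⟩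
  rintro ⟨hcard, htw⟩
  lift S to Finset V using Set.finite_of_encard_le_coe hcard
  refine TreewidthLE.glue (U := fun C : {C // IsCompOf G S C} => C.1 ∪ nbhd G C.1) hclique
    (by exact_mod_cast hcard) (fun v => ?_) (fun u v huv => ?_)
    (fun C D hne => C.2.union_nbhd_inter_subset D.2 (Subtype.coe_ne_coe.mpr hne))
    fun C => htw C.1 C.2
  · refine or_iff_not_imp_left.mpr fun hv => ?_
    obtain ⟨C, hC, hvC⟩ := exists_isCompOf_mem (G := G) hv
    exact ⟨⟨C, hC⟩, Or.inl hvC⟩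
  · refine or_iff_not_imp_left.mpr fun h => ?_
    obtain ⟨C, hC, huvC⟩ := exists_isCompOf_of_adj huv (not_and_or.mp h)
    exact ⟨⟨C, hC⟩, huvC⟩

theorem treewidth_clique_separator_general (hG : ∃ k, TreewidthLE G k) (hclique : G.IsClique S) :
    treewidth G = max (S.ncard - 1)
      (sSup {k : ℕ | ∃ C : Set V, IsCompOf G S C ∧
        k = treewidth (G.induce (C ∪ nbhd G C))}) := by
  obtain ⟨k₀, hk₀⟩ := hG
  obtain ⟨hS, hcomp⟩ := (treewidthLE_iff_of_isClique hclique).mp hk₀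
  have hbdd : BddAbove {k : ℕ | ∃ C : Set V, IsCompOf G S C ∧
      k = treewidth (G.induce (C ∪ nbhd G C))} := by
    refine ⟨k₀, ?_⟩
    rintro _ ⟨C, hC, rfl⟩
    exact (treewidth_le_iff ⟨k₀, hcomp C hC⟩).mpr (hcomp C hC)
  refine eq_of_forall_ge_iff fun k => ?_
  rw [treewidth_le_iff ⟨k₀, hk₀⟩, treewidthLE_iff_of_isClique hclique, max_le_iff,
    tsub_le_iff_right, csSup_le_iff' hbdd, Set.encard_le_coe_iff_finite_ncard_le]
  refine and_congr (and_iff_right (Set.finite_of_encard_le_coe hS)) ?_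
  have piece_le_iff (C : Set V) (hC : IsCompOf G S C) := treewidth_le_iff (k := k) ⟨k₀, hcomp C hC⟩
  constructor
  · rintro h _ ⟨C, hC, rfl⟩
    exact (piece_le_iff C hC).mpr (h C hC)
  · exact fun h C hC => (piece_le_iff C hC).mp (h _ ⟨C, hC, rfl⟩)

end CliqueSeparator

/-- if `S` is a clique separator of `G`, then `tw(G)` is the larger
of `|S| - 1` and the maximum of `tw(G[C ∪ N_G(C)])` over components `C` of `G - S`. -/
theorem treewidth_clique_separator {V : Type} [Fintype V] (G : SimpleGraph V)
    (S : Set V) (hclique : G.IsClique S) (hsep : IsSeparator G S) :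
    treewidth G = max (S.ncard - 1)
      (sSup {k : ℕ | ∃ C : Set V, IsCompOf G S C ∧
        k = treewidth (G.induce (C ∪ nbhd G C))}) :=
  treewidth_clique_separator_general (exists_treewidthLE G) hclique
end
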